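/- arXiv:1608.04756 — 5 statements merged into one kernel-verified Lean document; each statement's English description precedes it below -/
import Mathlib

section
/- Let K be a field of characteristic zero equipped with a derivation δ : K → K, let n be a natural number, and let x, y ∈ K with x ≠ 0. If δ(x) = (n+1)·y − n and δ(y) = y·(y−1)/x, then δ(yⁿ·(y−1)/x) = 0; that is, yⁿ·(y−1)/x is a constant of the differential field, so the map (x,y) ↦ yⁿ(y−1)/x is a rational first integral of the vector field x' = n·y + y − n, y' = y(y−1)/x. -/
/-!
The functions `y`, `y - 1` and `x` are eigenfunctions of the vector field, in Darboux's sense, with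
cofactors `(y - 1) / x`, `y / x` and `((n + 1) y - n) / x`. Cofactors behave like logarithmic
derivatives, so that of `y ^ n (y - 1) / x` is `(n (y - 1) + y - ((n + 1) y - n)) / x = 0`.
-/

section Cofactor

variable {R A : Type*} [CommSemiring R] [CommSemiring A] [Algebra R A] {D : Derivation R A A}

/-- `k` is a cofactor of the Darboux element `f` for the derivation `D`. This is `k = D f / f`
without the division, so that `f` may be zero or a zero divisor; `k` need not be unique then. -/
def IsCofactor (D : Derivation R A A) (f k : A) : Prop :=
  D f = k * f

namespace IsCofactor

theorem one : IsCofactor D 1 0 := by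
  simp [IsCofactor]

theorem mul {f g k l : A} (hf : IsCofactor D f k) (hg : IsCofactor D g l) :
    IsCofactor D (f * g) (k + l) := by
  unfold IsCofactor at *
  rw [D.leibniz, hf, hg, smul_eq_mul, smul_eq_mul]
  ring

theorem pow {f k : A} (hf : IsCofactor D f k) (n : ℕ) : IsCofactor D (f ^ n) (n * k) := by
  induction n with
  | zero => simpa using one (D := D)
  | succ n ih => simpa only [pow_succ, Nat.cast_succ, add_one_mul] using ih.mul hf

end IsCofactor

end Cofactor

section CommRing

variable {R A : Type*} [CommRing R] [CommRing A] [Algebra R A] {D : Derivation R A A}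

theorem IsCofactor.units_inv {u : Aˣ} {k : A} (hu : IsCofactor D (u : A) k) :
    IsCofactor D (↑u⁻¹ : A) (-k) := by
  unfold IsCofactor at *
  rw [D.leibniz_of_mul_eq_one u.inv_mul, hu, smul_eq_mul]
  linear_combination (-k * ↑u⁻¹) * u.inv_mul

/-- The derivation over `ℤ` given by an additive map satisfying the Leibniz rule. -/
def derivationOfLeibniz (δ : A → A) (hadd : ∀ a b : A, δ (a + b) = δ a + δ b)
    (hleib : ∀ a b : A, δ (a * b) = a * δ b + δ a * b) : Derivation ℤ A A :=
  .mk' (AddMonoidHom.mk' δ hadd).toIntLinearMap fun a b ↦ by simp [hleib, mul_comm]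

-- The element `p` plays the role of `y ^ c`, which need not make sense for arbitrary `c`.
theorem rational_first_integral_general (D : Derivation R A A) (c y p : A) (x : Aˣ)
    (hdx : D (x : A) = (c + 1) * y - c) (hdy : D y = y * (y - 1) * ↑x⁻¹)
    (hp : IsCofactor D p (c * ((y - 1) * ↑x⁻¹))) :
    D (p * (y - 1) * ↑x⁻¹) = 0 := by
  have hy : IsCofactor D (y - 1) (y * ↑x⁻¹) := by
    rw [IsCofactor, map_sub, D.map_one_eq_zero, hdy]
    ring
  have hx : IsCofactor D (x : A) (((c + 1) * y - c) * ↑x⁻¹) := by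
    rw [IsCofactor, hdx, Units.inv_mul_cancel_right]
  have hcofactor : c * ((y - 1) * ↑x⁻¹) + y * ↑x⁻¹ + -(((c + 1) * y - c) * ↑x⁻¹) = 0 := by
    ring
  rw [(hp.mul hy).mul hx.units_inv, hcofactor, zero_mul]

end CommRing

/-- For the vector field `x' = n·y + y − n`, `y' = y(y−1)/x`, the rational function
`yⁿ·(y−1)/x` is a first integral: its derivative under `δ` vanishes. -/
theorem rational_first_integral
    {K : Type*} [Field K] [CharZero K] (δ : K → K)
    (hadd : ∀ a b : K, δ (a + b) = δ a + δ b)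
    (hleib : ∀ a b : K, δ (a * b) = a * δ b + δ a * b)
    (n : ℕ) (x y : K) (hx : x ≠ 0)
    (hdx : δ x = ((n : K) + 1) * y - (n : K))
    (hdy : δ y = y * (y - 1) / x) :
    δ (y ^ n * (y - 1) / x) = 0 := by
  rw [div_eq_mul_inv] at hdy ⊢
  have hy : IsCofactor (derivationOfLeibniz δ hadd hleib) y ((y - 1) * x⁻¹) :=
    hdy.trans (by ring)
  exact rational_first_integral_general _ (n : K) y (y ^ n) (.mk0 x hx) hdx hdy (hy.pow n)
end

section
/- Let n be a natural number, let x, y : ℂ → ℂ, and let t₀ ∈ ℂ. Suppose x has derivative (n+1)·y(t₀) − n at t₀, y has derivative y(t₀)·(y(t₀) − 1)/x(t₀) at t₀, and x(t₀) ≠ 0. Then the function t ↦ y(t)ⁿ·(y(t) − 1)/x(t) has derivative 0 at t₀. -/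
/-!
Since `y' = y (y - 1) / x`, the logarithmic derivatives of `y` and `y - 1` are `(y - 1) / x` and
`y / x`, so that of `y ^ n * (y - 1)` is `(n * (y - 1) + y) / x = ((n + 1) * y - n) / x = x' / x`.
Numerator and denominator of the first integral thus have the same logarithmic derivative.
-/

theorem zpow_sub_one_mul_self {G₀ : Type*} [GroupWithZero G₀] (a : G₀) {n : ℤ} (hn : n ≠ 0) :
    a ^ (n - 1) * a = a ^ n := by
  simpa using (zpow_add' (a := a) (m := n - 1) (n := 1) (by simp [hn])).symm

variable {𝕜 𝕜' : Type*} [NontriviallyNormedField 𝕜]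

/-- `a` is a logarithmic derivative of `f` at `t` within `s`. It is encoded as `f' = a * f`
rather than `f' / f = a`, so that the calculus below remains valid where `f` vanishes. -/
def HasLogDerivWithinAt [NormedCommRing 𝕜'] [NormedAlgebra 𝕜 𝕜']
    (f : 𝕜 → 𝕜') (a : 𝕜') (s : Set 𝕜) (t : 𝕜) : Prop :=
  HasDerivWithinAt f (a * f t) s t

namespace HasLogDerivWithinAt

variable {f g : 𝕜 → 𝕜'} {a b : 𝕜'} {s : Set 𝕜} {t : 𝕜}

theorem mul [NormedCommRing 𝕜'] [NormedAlgebra 𝕜 𝕜']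
    (hf : HasLogDerivWithinAt f a s t) (hg : HasLogDerivWithinAt g b s t) :
    HasLogDerivWithinAt (fun τ => f τ * g τ) (a + b) s t :=
  (HasDerivWithinAt.fun_mul hf hg).congr_deriv (by ring)

variable [NontriviallyNormedField 𝕜'] [NormedAlgebra 𝕜 𝕜']

theorem zpow (hf : HasLogDerivWithinAt f a s t) (n : ℤ) (hn : f t ≠ 0 ∨ 0 ≤ n) :
    HasLogDerivWithinAt (fun τ => f τ ^ n) (n * a) s t := by
  have zpow_pred_mul : (n : 𝕜') * (f t ^ (n - 1) * f t) = n * f t ^ n := by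
    rcases eq_or_ne n 0 with rfl | hn0
    · simp
    · rw [zpow_sub_one_mul_self (f t) hn0]
  refine ((hasDerivAt_zpow n (f t) hn).comp_hasDerivWithinAt t hf).congr_deriv ?_
  linear_combination a * zpow_pred_mul

theorem div (hf : HasLogDerivWithinAt f a s t) (hg : HasLogDerivWithinAt g b s t)
    (hg0 : g t ≠ 0) : HasLogDerivWithinAt (fun τ => f τ / g τ) (a - b) s t :=
  (HasDerivWithinAt.fun_div hf hg hg0).congr_deriv (by field_simp)

end HasLogDerivWithinAt

theorem first_integral_hasDerivAt_zero_general [NontriviallyNormedField 𝕜'] [NormedAlgebra 𝕜 𝕜']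
    (n : ℤ) (x y : 𝕜 → 𝕜') (s : Set 𝕜) (t₀ : 𝕜)
    (hx : HasDerivWithinAt x ((n + 1) * y t₀ - n) s t₀)
    (hy : HasDerivWithinAt y (y t₀ * (y t₀ - 1) / x t₀) s t₀)
    (hx0 : x t₀ ≠ 0) (hn : y t₀ ≠ 0 ∨ 0 ≤ n) :
    HasDerivWithinAt (fun t => y t ^ n * (y t - 1) / x t) 0 s t₀ := by
  have logDeriv_y : HasLogDerivWithinAt y ((y t₀ - 1) / x t₀) s t₀ :=
    hy.congr_deriv (by ring)
  have logDeriv_y_sub_one : HasLogDerivWithinAt (fun t => y t - 1) (y t₀ / x t₀) s t₀ :=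
    (hy.sub_const 1).congr_deriv (by ring)
  have logDeriv_x : HasLogDerivWithinAt x (((n + 1) * y t₀ - n) / x t₀) s t₀ :=
    hx.congr_deriv (div_mul_cancel₀ _ hx0).symm
  have logDeriv_quotient := ((logDeriv_y.zpow n hn).mul logDeriv_y_sub_one).div logDeriv_x hx0
  have logDeriv_eq_zero :
      n * ((y t₀ - 1) / x t₀) + y t₀ / x t₀ - ((n + 1) * y t₀ - n) / x t₀ = 0 := by ring
  exact HasDerivWithinAt.congr_deriv logDeriv_quotient (by rw [logDeriv_eq_zero, zero_mul])

/-- Along complex-analytic solutions of `x' = n·y + y − n`, `y' = y(y−1)/x`,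
the function `t ↦ y(t)ⁿ·(y(t)−1)/x(t)` has derivative `0`. -/
theorem first_integral_hasDerivAt_zero
    (n : ℕ) (x y : ℂ → ℂ) (t₀ : ℂ)
    (hx : HasDerivAt x (((n : ℂ) + 1) * y t₀ - (n : ℂ)) t₀)
    (hy : HasDerivAt y (y t₀ * (y t₀ - 1) / x t₀) t₀)
    (hx0 : x t₀ ≠ 0) :
    HasDerivAt (fun t => y t ^ n * (y t - 1) / x t) 0 t₀ := by
  simpa [hasDerivWithinAt_univ] using first_integral_hasDerivAt_zero_general n x y Set.univ t₀
    (by simpa using hx) (by simpa using hy) hx0 (.inr n.cast_nonneg)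
end

section
/- Let c ∈ ℝ, let x, y : ℝ → ℝ, and let t₀ ∈ ℝ. Suppose x has derivative c·y(t₀) + y(t₀) − c at t₀, y has derivative y(t₀)·(y(t₀) − 1)/x(t₀) at t₀, x(t₀) > 0, and 0 < y(t₀) < 1. Then the function t ↦ c·log(y(t)) + log(1 − y(t)) − log(x(t)) has derivative 0 at t₀. In particular the relation c₁ + log x = c·log y + log(1 − y) is preserved (to first order) along solutions of the system x' = c·y + y − c, y' = y(y−1)/x. -/
/-!
Along the system the logarithmic derivatives of `y` and `1 - y` are `(y - 1) / x` and `y / x`.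
Combined with weights `c` and `1` they give `(c * (y - 1) + y) / x = x' / x`, the logarithmic
derivative of `x`.
-/

theorem log_relation_deriv_eq_zero {K : Type*} [Field K] (c x : K) {y : K}
    (hy₀ : y ≠ 0) (hy₁ : y ≠ 1) :
    c * (y * (y - 1) / x / y) + -(y * (y - 1) / x) / (1 - y) - (c * y + y - c) / x = 0 := by
  have h_log_y : y * (y - 1) / x / y = (y - 1) / x := by
    rw [div_right_comm, mul_div_cancel_left₀ _ hy₀]
  have h_log_one_sub_y : -(y * (y - 1) / x) / (1 - y) = y / x := by
    rw [← neg_div, ← mul_neg, neg_sub, div_right_comm,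
      mul_div_cancel_right₀ _ (sub_ne_zero.2 hy₁.symm)]
  rw [h_log_y, h_log_one_sub_y]
  ring

theorem hasDerivAt_log_abs_relation (c : ℝ) {x y : ℝ → ℝ} {x' y' t₀ : ℝ}
    (hx : HasDerivAt x x' t₀) (hy : HasDerivAt y y' t₀)
    (hx₀ : x t₀ ≠ 0) (hy₀ : y t₀ ≠ 0) (hy₁ : y t₀ ≠ 1) :
    HasDerivAt (fun t => c * Real.log |y t| + Real.log |1 - y t| - Real.log |x t|)
      (c * (y' / y t₀) + -y' / (1 - y t₀) - x' / x t₀) t₀ := by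
  simp only [Real.log_abs]
  have h_log_one_sub_y := (hy.const_sub 1).log (sub_ne_zero.2 hy₁.symm)
  exact (((hy.log hy₀).const_mul c).add h_log_one_sub_y).sub (hx.log hx₀)

theorem log_relation_hasDerivAt_zero_general (c : ℝ) {x y : ℝ → ℝ} {t₀ : ℝ}
    (hx : HasDerivAt x (c * y t₀ + y t₀ - c) t₀)
    (hy : HasDerivAt y (y t₀ * (y t₀ - 1) / x t₀) t₀)
    (hx₀ : x t₀ ≠ 0) (hy₀ : y t₀ ≠ 0) (hy₁ : y t₀ ≠ 1) :
    HasDerivAt (fun t => c * Real.log |y t| + Real.log |1 - y t| - Real.log |x t|) 0 t₀ :=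
  (hasDerivAt_log_abs_relation c hx hy hx₀ hy₀ hy₁).congr_deriv
    (log_relation_deriv_eq_zero c (x t₀) hy₀ hy₁)

/-- Along real solutions of `x' = c·y + y − c`, `y' = y(y−1)/x` (with `x > 0`,
`0 < y < 1`), the function `t ↦ c·log(y t) + log(1 − y t) − log(x t)` has
derivative `0`. -/
theorem log_relation_hasDerivAt_zero
    (c : ℝ) (x y : ℝ → ℝ) (t₀ : ℝ)
    (hx : HasDerivAt x (c * y t₀ + y t₀ - c) t₀)
    (hy : HasDerivAt y (y t₀ * (y t₀ - 1) / x t₀) t₀)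
    (hxpos : 0 < x t₀) (hy0 : 0 < y t₀) (hy1 : y t₀ < 1) :
    HasDerivAt (fun t => c * Real.log (y t) + Real.log (1 - y t) - Real.log (x t)) 0 t₀ := by
  simpa only [Real.log_abs] using
    log_relation_hasDerivAt_zero_general c hx hy hxpos.ne' hy0.ne' hy1.ne
end

section
/- Let c ∈ ℝ, let x, y : ℝ → ℝ be differentiable functions on a preconnected open set U ⊆ ℝ such that for every t ∈ U: x'(t) = c·y(t) + y(t) − c, y'(t) = y(t)·(y(t) − 1)/x(t), x(t) > 0, and 0 < y(t) < 1. Then there exists a constant c₁ ∈ ℝ such that c₁ + log(x(t)) = c·log(y(t)) + log(1 − y(t)) for all t ∈ U. -/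
/-!
The two equations combine into `c · dy / y + d(1 - y) / (1 - y) = dx / x`, an identity between
logarithmic differentials, which integrates to the relation.
-/

theorem mul_div_add_neg_div_one_sub_eq {K : Type*} [Field K] (c a : K) {y : K}
    (hy0 : y ≠ 0) (hy1 : y ≠ 1) :
    c * (y * (y - 1) / a / y) + -(y * (y - 1) / a) / (1 - y) = (c * y + y - c) / a := by
  have dlog_y : y * (y - 1) / a / y = (y - 1) / a := by
    rw [mul_div_assoc, mul_div_cancel_left₀ _ hy0]
  have dlog_one_sub_y : -(y * (y - 1) / a) / (1 - y) = y / a := by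
    rw [div_eq_iff (sub_ne_zero.mpr hy1.symm)]
    ring
  rw [dlog_y, dlog_one_sub_y]
  ring

theorem hasDerivAt_mul_log_add_log_one_sub (c : ℝ) {a t : ℝ} {y : ℝ → ℝ}
    (hy : HasDerivAt y (y t * (y t - 1) / a) t) (hy0 : y t ≠ 0) (hy1 : y t ≠ 1) :
    HasDerivAt (fun s ↦ c * Real.log (y s) + Real.log (1 - y s)) ((c * y t + y t - c) / a) t :=
  (((hy.log hy0).const_mul c).add
    ((hy.const_sub 1).log (sub_ne_zero.mpr hy1.symm))).congr_deriv
      (mul_div_add_neg_div_one_sub_eq c a hy0 hy1)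

theorem log_relation_on_preconnected_general {c : ℝ} {x y : ℝ → ℝ} {U : Set ℝ}
    (hU : IsOpen U) (hUc : IsPreconnected U)
    (hx : ∀ t ∈ U, HasDerivAt x (c * y t + y t - c) t)
    (hy : ∀ t ∈ U, HasDerivAt y (y t * (y t - 1) / x t) t)
    (hx0 : ∀ t ∈ U, x t ≠ 0) (hy0 : ∀ t ∈ U, y t ≠ 0) (hy1 : ∀ t ∈ U, y t ≠ 1) :
    ∃ c₁ : ℝ, ∀ t ∈ U,
      c₁ + Real.log |x t| = c * Real.log |y t| + Real.log |1 - y t| := by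
  simp only [Real.log_abs]
  have deriv_lhs : ∀ t ∈ U,
      HasDerivAt (fun s ↦ Real.log (x s)) ((c * y t + y t - c) / x t) t :=
    fun t ht ↦ (hx t ht).log (hx0 t ht)
  have deriv_rhs : ∀ t ∈ U, HasDerivAt (fun s ↦ c * Real.log (y s) + Real.log (1 - y s))
      ((c * y t + y t - c) / x t) t :=
    fun t ht ↦ hasDerivAt_mul_log_add_log_one_sub c (hy t ht) (hy0 t ht) (hy1 t ht)
  obtain ⟨c₁, hc₁⟩ := hU.exists_eq_add_of_deriv_eq hUc
    (fun t ht ↦ (deriv_rhs t ht).differentiableAt.differentiableWithinAt)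
    (fun t ht ↦ (deriv_lhs t ht).differentiableAt.differentiableWithinAt)
    (fun t ht ↦ (deriv_rhs t ht).deriv.trans (deriv_lhs t ht).deriv.symm)
  exact ⟨c₁, fun t ht ↦ (add_comm _ _).trans (hc₁ ht).symm⟩

/-- Solutions of the system `x' = c·y + y − c`, `y' = y(y−1)/x` on a preconnected
open set satisfy the relation `c₁ + log x = c·log y + log(1 − y)` for some
constant `c₁`. -/
theorem log_relation_on_preconnected
    (c : ℝ) (x y : ℝ → ℝ) (U : Set ℝ) (hU : IsOpen U) (hUc : IsPreconnected U)
    (hx : ∀ t ∈ U, HasDerivAt x (c * y t + y t - c) t)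
    (hy : ∀ t ∈ U, HasDerivAt y (y t * (y t - 1) / x t) t)
    (hxpos : ∀ t ∈ U, 0 < x t)
    (hy0 : ∀ t ∈ U, 0 < y t) (hy1 : ∀ t ∈ U, y t < 1) :
    ∃ c₁ : ℝ, ∀ t ∈ U,
      c₁ + Real.log (x t) = c * Real.log (y t) + Real.log (1 - y t) := by
  simpa only [Real.log_abs] using log_relation_on_preconnected_general hU hUc hx hy
    (fun t ht ↦ (hxpos t ht).ne') (fun t ht ↦ (hy0 t ht).ne') (fun t ht ↦ (hy1 t ht).ne)
end

section
/- Let K be a field of characteristic zero equipped with a derivation δ : K → K, and let F be a subfield of K closed under δ (a differential subfield). Let c ∈ F with δ(c) = 0 and c ≠ −1, and let x, y ∈ K with x ≠ 0, y ≠ 0, y ≠ 1, satisfying δ(x) = c·y + y − c and δ(y) = y·(y−1)/x. Then x ∈ F if and only if y ∈ F. -/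
theorem mul_mem_cancel_left₀ {G S : Type*} [GroupWithZero G] [SetLike S G]
    [MulMemClass S G] [InvMemClass S G] {s : S} {a b : G} (ha : a ∈ s) (ha0 : a ≠ 0) :
    a * b ∈ s ↔ b ∈ s where
  mp hab := inv_mul_cancel_left₀ ha0 b ▸ mul_mem (inv_mem ha) hab
  mpr := mul_mem ha

theorem mem_subfield_iff_general
    {K : Type*} [DivisionRing K] (δ : K → K)
    (F : Subfield K) (hF : ∀ a ∈ F, δ a ∈ F)
    (c : K) (hcF : c ∈ F) (hc1 : c ≠ -1)
    (x y : K) (hx0 : x ≠ 0) (hy0 : y ≠ 0) (hy1 : y ≠ 1)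
    (hdx : δ x = c * y + y - c)
    (hdy : δ y = y * (y - 1) / x) :
    x ∈ F ↔ y ∈ F := by
  constructor
  · intro hx
    have c_add_one_ne_zero : c + 1 ≠ 0 := mt eq_neg_of_add_eq_zero_left hc1
    have mul_y_eq : (c + 1) * y = δ x + c := by rw [hdx, sub_add_cancel, add_one_mul]
    rw [← mul_mem_cancel_left₀ (add_mem hcF (one_mem F)) c_add_one_ne_zero, mul_y_eq]
    exact add_mem (hF x hx) hcF
  · intro hy
    have δy_ne_zero : δ y ≠ 0 :=
      hdy ▸ div_ne_zero (mul_ne_zero hy0 (sub_ne_zero.mpr hy1)) hx0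
    have δy_mul_x_eq : δ y * x = y * (y - 1) := (eq_div_iff hx0).mp hdy
    rw [← mul_mem_cancel_left₀ (hF y hy) δy_ne_zero, δy_mul_x_eq]
    exact mul_mem hy (sub_mem hy (one_mem F))

/-- For the system `δ x = c·y + y − c`, `δ y = y(y−1)/x` with `c ≠ −1` a constant
in a differential subfield `F`, we have `x ∈ F` iff `y ∈ F`. -/
theorem mem_subfield_iff
    {K : Type*} [Field K] [CharZero K] (δ : K → K)
    (hadd : ∀ a b : K, δ (a + b) = δ a + δ b)
    (hleib : ∀ a b : K, δ (a * b) = a * δ b + δ a * b)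
    (F : Subfield K) (hF : ∀ a ∈ F, δ a ∈ F)
    (c : K) (hcF : c ∈ F) (hc : δ c = 0) (hc1 : c ≠ -1)
    (x y : K) (hx0 : x ≠ 0) (hy0 : y ≠ 0) (hy1 : y ≠ 1)
    (hdx : δ x = c * y + y - c)
    (hdy : δ y = y * (y - 1) / x) :
    x ∈ F ↔ y ∈ F :=
  mem_subfield_iff_general δ F hF c hcF hc1 x y hx0 hy0 hy1 hdx hdy
end
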